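/- arXiv:2310.08428 — 4 statements merged into one kernel-verified Lean document; each statement's English description precedes it below -/
import Mathlib

section
/- Let X be a compact topological space and let A be a subalgebra of the algebra C(X, ℂ) of continuous complex-valued functions on X which contains the constant function 1, is closed under complex conjugation, and is spectrally invariant in C(X): whenever f ∈ A is invertible in C(X, ℂ) (equivalently, f vanishes nowhere on X), the function 1/f also belongs to A. Then every maximal proper ideal I of A is of the form I_p = {f ∈ A : f(p) = 0} for some point p ∈ X. -/
noncomputable section

/-- Milnor's exercise: let `X` be a compact topological space and `A` a
subalgebra of `C(X, ℂ)` (so `A` contains the constant function `1`) which is closed under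
complex conjugation and spectrally invariant in `C(X, ℂ)` (the inverse of any element of
`A` that is invertible in `C(X, ℂ)` again lies in `A`).  Then every maximal (proper) ideal
`I` of `A` is of the form `I_p = {f ∈ A : f p = 0}` for some point `p ∈ X`. -/
theorem stmt_0 {X : Type*} [TopologicalSpace X] [CompactSpace X]
    (A : Subalgebra ℂ C(X, ℂ))
    (hconj : ∀ f ∈ A, star f ∈ A)
    (hspec : ∀ f ∈ A, ∀ g : C(X, ℂ), f * g = 1 → g ∈ A)
    (I : Ideal A) (hI : I.IsMaximal) :
    ∃ p : X, ∀ f : A, f ∈ I ↔ (f : C(X, ℂ)) p = 0 := by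
  have key : ∃ p : X, ∀ f ∈ I, (f : C(X, ℂ)) p = 0 := by
    by_contra hcon
    push Not at hcon
    obtain ⟨t, ht⟩ := isCompact_univ.elim_finite_subcover
      (fun f : I => {x : X | ((f : A) : C(X, ℂ)) x ≠ 0})
      (fun f => isOpen_ne_fun ((f : A) : C(X, ℂ)).continuous continuous_const)
      (by
        intro x _
        obtain ⟨f, hf, hx⟩ := hcon x
        exact Set.mem_iUnion.2 ⟨⟨f, hf⟩, hx⟩)
    let s : A := ∑ f ∈ t, (⟨star ((f : A) : C(X, ℂ)), hconj _ (f : A).2⟩ : A) * (f : A)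
    have hsI : s ∈ I := I.sum_mem fun f _ => I.mul_mem_left _ f.2
    have hsx : ∀ x, (s : C(X, ℂ)) x
        = ((∑ f ∈ t, Complex.normSq (((f : A) : C(X, ℂ)) x) : ℝ) : ℂ) := by
      intro x
      simp only [s, AddSubmonoidClass.coe_finsetSum, ContinuousMap.coe_sum, Finset.sum_apply,
        MulMemClass.coe_mul, ContinuousMap.mul_apply, ContinuousMap.star_apply,
        Complex.ofReal_sum]
      refine Finset.sum_congr rfl fun f _ => ?_
      exact (Complex.normSq_eq_conj_mul_self).symm
    have hs0 : ∀ x, (s : C(X, ℂ)) x ≠ 0 := by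
      intro x
      rw [hsx, Complex.ofReal_ne_zero]
      obtain ⟨f, hft, hfx⟩ := Set.mem_iUnion₂.1 (ht (Set.mem_univ x))
      apply ne_of_gt
      apply Finset.sum_pos'
      · intro g _
        exact Complex.normSq_nonneg _
      · exact ⟨f, hft, Complex.normSq_pos.2 hfx⟩
    let g : C(X, ℂ) := ⟨fun x => ((s : C(X, ℂ)) x)⁻¹, (s : C(X, ℂ)).continuous.inv₀ hs0⟩
    have hg : (s : C(X, ℂ)) * g = 1 := by
      ext x
      exact mul_inv_cancel₀ (hs0 x)
    have hgA := hspec _ s.2 g hg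
    apply hI.ne_top
    rw [Ideal.eq_top_iff_one]
    have h1 : s * ⟨g, hgA⟩ = 1 := Subtype.ext hg
    rw [← h1]
    exact I.mul_mem_right _ hsI
  obtain ⟨p, hp⟩ := key
  refine ⟨p, ?_⟩
  let J : Ideal A :=
    { carrier := {f | (f : C(X, ℂ)) p = 0}
      add_mem' := by
        intro a b ha hb
        change (a : C(X, ℂ)) p + (b : C(X, ℂ)) p = 0
        rw [show (a : C(X, ℂ)) p = 0 from ha, show (b : C(X, ℂ)) p = 0 from hb, add_zero]
      zero_mem' := rfl
      smul_mem' := by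
        intro c a ha
        change (c : C(X, ℂ)) p * (a : C(X, ℂ)) p = 0
        rw [show (a : C(X, ℂ)) p = 0 from ha, mul_zero] }
  have hJ : J ≠ ⊤ := by
    rw [Ne, Ideal.eq_top_iff_one]
    intro h
    exact one_ne_zero (α := ℂ) h
  have hIJ : I = J := hI.eq_of_le hJ hp
  intro f
  rw [hIJ]
  rfl
end
end

section
/- Let d ≥ 2 and let e : ℝ^d → ℂ be a smooth function such that every iterated partial derivative of e of order at least 1 is rapidly decreasing, i.e. for every multi-index α ≠ 0 and every N ∈ ℕ there is C > 0 with |∂^α e(x)| ≤ C⟨x⟩^{−N} for all x ∈ ℝ^d. Then there exists a constant c ∈ ℂ such that the function x ↦ e(x) − c is a Schwartz function on ℝ^d. -/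
noncomputable section

open Filter Topology

lemma aux_opNorm {d k : ℕ} (f : ContinuousMultilinearMap ℝ (fun _ : Fin k => EuclideanSpace ℝ (Fin d)) ℂ) :
    ‖f‖ ≤ ∑ m : Fin k → Fin d, ‖f (fun i => EuclideanSpace.single (m i) 1)‖ := by
  refine ContinuousMultilinearMap.opNorm_le_bound (by positivity) ?_
  intro v
  have hv : v = fun i => ∑ j, (v i j) • (EuclideanSpace.single j (1:ℝ)) := by
    funext i
    have := (EuclideanSpace.basisFun (Fin d) ℝ).sum_repr (v i)
    simpa using this.symm
  have h1 : f v = ∑ m : Fin k → Fin d, (∏ i, v i (m i)) • f (fun i => EuclideanSpace.single (m i) 1) := by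
    conv_lhs => rw [hv]
    rw [ContinuousMultilinearMap.map_sum]
    refine Finset.sum_congr rfl fun m _ => ?_
    exact ContinuousMultilinearMap.map_smul_univ f _ _
  rw [h1, Finset.sum_mul]
  refine (norm_sum_le _ _).trans (Finset.sum_le_sum fun m _ => ?_)
  rw [norm_smul, mul_comm, norm_prod]
  gcongr with i
  exact PiLp.norm_apply_le (v i) (m i)

lemma aux_seg {E : Type*} [NormedAddCommGroup E] [NormedSpace ℝ E] {e : E → ℂ}
    (he : Differentiable ℝ e) {N : ℕ} {A : ℝ} (hA : ∀ x, ‖x‖ ^ N * ‖fderiv ℝ e x‖ ≤ A)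
    {S : Set E} (hS : Convex ℝ S) {ρ : ℝ} (hρ : 0 < ρ) (hSρ : ∀ z ∈ S, ρ ≤ ‖z‖)
    {x y : E} (hx : x ∈ S) (hy : y ∈ S) : ‖e y - e x‖ ≤ A / ρ ^ N * ‖y - x‖ := by
  refine hS.norm_image_sub_le_of_norm_fderiv_le (𝕜 := ℝ) (fun z _ => he z) ?_ hx hy
  intro z hz
  rw [le_div_iff₀ (by positivity), mul_comm]
  refine le_trans ?_ (hA z)
  gcongr
  exact hSρ z hz

lemma aux_step {E : Type*} [NormedAddCommGroup E] [NormedSpace ℝ E] {e : E → ℂ}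
    (he : Differentiable ℝ e) {N : ℕ} {A : ℝ} (hA : ∀ x, ‖x‖ ^ (N + 2) * ‖fderiv ℝ e x‖ ≤ A)
    {x : E} (hx : x ≠ 0) (n : ℕ) :
    dist (e ((2:ℝ) ^ n • x)) (e ((2:ℝ) ^ (n+1) • x)) ≤ (2 * A / ‖x‖ ^ (N + 1)) / 2 / 2 ^ n := by
  have hx0 : 0 < ‖x‖ := norm_pos_iff.2 hx
  have hA0 : 0 ≤ A := le_trans (by positivity) (hA 0)
  have hn : ‖(2:ℝ) ^ n • x‖ = 2 ^ n * ‖x‖ := by rw [norm_smul]; simp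
  have key := aux_seg he hA (convex_segment ((2:ℝ) ^ n • x) ((2:ℝ) ^ (n+1) • x))
    (ρ := 2 ^ n * ‖x‖) (by positivity) ?_ (left_mem_segment ℝ _ _) (right_mem_segment ℝ _ _)
  · rw [dist_comm, dist_eq_norm]
    refine key.trans ?_
    have : (2:ℝ) ^ (n+1) • x - (2:ℝ) ^ n • x = (2:ℝ) ^ n • x := by
      rw [← sub_smul]; congr 1; ring
    rw [this, hn]
    have e1 : A / (2 ^ n * ‖x‖) ^ (N + 2) * (2 ^ n * ‖x‖) = A / ‖x‖ ^ (N+1) / (2 ^ n) ^ (N+1) := by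
      rw [mul_pow]
      field_simp
      ring
    have e2 : 2 * A / ‖x‖ ^ (N + 1) / 2 / 2 ^ n = A / ‖x‖ ^ (N+1) / (2 ^ n) := by
      field_simp
    rw [e1, e2]
    gcongr
    exact le_self_pow₀ (one_le_pow₀ (by norm_num)) (by omega)
  · intro z hz
    rw [segment_eq_image'] at hz
    obtain ⟨t, ht, rfl⟩ := hz
    have : (2:ℝ) ^ n • x + t • ((2:ℝ) ^ (n+1) • x - (2:ℝ) ^ n • x) = (1 + t) • ((2:ℝ) ^ n • x) := by
      rw [pow_succ]; module
    simp only [this]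
    rw [norm_smul, hn, Real.norm_of_nonneg (by linarith [ht.1])]
    have : 0 ≤ t * (2 ^ n * ‖x‖) := mul_nonneg ht.1 (by positivity)
    linarith

lemma aux_lim {E : Type*} [NormedAddCommGroup E] [NormedSpace ℝ E] (hE : 1 < Module.rank ℝ E) {e : E → ℂ}
    (he : Differentiable ℝ e) (hA : ∀ N : ℕ, ∃ A, ∀ x, ‖x‖ ^ N * ‖fderiv ℝ e x‖ ≤ A) :
    ∃ c : ℂ, ∀ N : ℕ, ∃ A : ℝ, ∀ x, x ≠ 0 → ‖x‖ ^ (N + 1) * ‖e x - c‖ ≤ A := by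
  have hex : ∀ x : E, ∃ l, x ≠ 0 → Tendsto (fun n : ℕ => e ((2:ℝ) ^ n • x)) atTop (𝓝 l) := by
    intro x
    by_cases hx : x = 0
    · exact ⟨0, fun h => absurd hx h⟩
    obtain ⟨A, hA⟩ := hA (0 + 2)
    obtain ⟨l, hl⟩ := cauchySeq_tendsto_of_complete (cauchySeq_of_le_geometric_two (aux_step he hA hx))
    exact ⟨l, fun _ => hl⟩
  choose L hL using hex
  have hloc : ∀ x : E, x ≠ 0 → L =ᶠ[𝓝 x] fun _ => L x := by
    intro x hx
    have hx0 : 0 < ‖x‖ := norm_pos_iff.2 hx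
    have hr : ∀ z ∈ Metric.ball x (‖x‖/2), ‖x‖ / 2 ≤ ‖z‖ := by
      intro z hz
      rw [Metric.mem_ball, dist_comm, dist_eq_norm] at hz
      linarith [norm_sub_norm_le x z]
    filter_upwards [Metric.ball_mem_nhds x (half_pos hx0)] with y hy
    have hy0 : y ≠ 0 := by
      have := hr y hy
      exact norm_pos_iff.1 (by linarith)
    obtain ⟨A, hA⟩ := hA 2
    have hA0 : 0 ≤ A := le_trans (by positivity) (hA 0)
    have hlim := (hL y hy0).sub (hL x hx)
    have hz : Tendsto (fun n : ℕ => e ((2:ℝ) ^ n • y) - e ((2:ℝ) ^ n • x)) atTop (𝓝 0) := by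
      refine squeeze_zero_norm (a := fun n : ℕ => (A / (‖x‖/2) ^ 2 * ‖y - x‖) * (1/2) ^ n) ?_ ?_
      · intro n
        have := aux_seg he hA ((convex_ball x (‖x‖/2)).smul ((2:ℝ) ^ n)) (ρ := 2 ^ n * (‖x‖ / 2))
          (by positivity) ?_ (Set.smul_mem_smul_set (Metric.mem_ball_self (half_pos hx0)))
          (Set.smul_mem_smul_set hy)
        · refine this.trans (le_of_eq ?_)
          rw [← smul_sub, norm_smul, norm_pow, Real.norm_ofNat, one_div, inv_pow]
          field_simp
        · rintro _ ⟨z, hz, rfl⟩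
          simp only [norm_smul, norm_pow, Real.norm_ofNat]
          gcongr
          exact hr z hz
      · simpa using (tendsto_pow_atTop_nhds_zero_of_lt_one (r := (1/2:ℝ)) (by norm_num) (by norm_num)).const_mul
          (A / (‖x‖/2) ^ 2 * ‖y - x‖)
    exact sub_eq_zero.1 (tendsto_nhds_unique hlim hz)
  have hconst : ∃ c, ∀ x : E, x ≠ 0 → L x = c := by
    have hc := (isConnected_compl_singleton_of_one_lt_rank hE (0:E)).isPreconnected
    have := isOpen_compl_singleton.exists_is_const_of_fderiv_eq_zero (𝕜 := ℝ) hc (f := L) ?_ ?_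
    · obtain ⟨c, hc⟩ := this
      exact ⟨c, fun x hx => hc x hx⟩
    · intro x hx
      exact ((hloc x hx).differentiableAt_iff.2 (differentiableAt_const _)).differentiableWithinAt
    · intro x hx
      simp [(hloc x hx).fderiv_eq]
  obtain ⟨c, hc⟩ := hconst
  refine ⟨c, fun N => ?_⟩
  obtain ⟨A, hA⟩ := hA (N + 2)
  refine ⟨2 * A, fun x hx => ?_⟩
  have hx0 : 0 < ‖x‖ := norm_pos_iff.2 hx
  have := dist_le_of_le_geometric_two_of_tendsto₀ (aux_step he hA hx) (hL x hx)
  rw [hc x hx, dist_eq_norm, le_div_iff₀ (by positivity)] at this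
  rw [mul_comm]
  simpa using this

/-- if `e : ℝ^d → ℂ` (`d ≥ 2`) is smooth and every iterated partial
derivative of order at least one is rapidly decreasing (bounded by `C ⟨x⟩^{−N}` for every
`N`), then there is a constant `c ∈ ℂ` such that `x ↦ e x − c` is a Schwartz function.
Mixed partial derivatives are encoded as the iterated Fréchet derivative evaluated at
tuples of coordinate directions. -/
theorem stmt_1 (d : ℕ) (hd : 2 ≤ d) (e : EuclideanSpace ℝ (Fin d) → ℂ)
    (he : ContDiff ℝ (⊤ : ℕ∞) e)
    (hdecay : ∀ k : ℕ, 1 ≤ k → ∀ m : Fin k → Fin d, ∀ N : ℕ, ∃ C : ℝ, 0 < C ∧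
      ∀ x : EuclideanSpace ℝ (Fin d),
        ‖iteratedFDeriv ℝ k e x (fun i => EuclideanSpace.single (m i) 1)‖ ≤
          C * Real.sqrt (1 + ‖x‖ ^ 2) ^ (-(N : ℝ))) :
    ∃ c : ℂ, ∃ f : SchwartzMap (EuclideanSpace ℝ (Fin d)) ℂ, ∀ x, f x = e x - c := by
  have hD : ∀ k : ℕ, 1 ≤ k → ∀ N : ℕ, ∃ A : ℝ, ∀ x, ‖x‖ ^ N * ‖iteratedFDeriv ℝ k e x‖ ≤ A := by
    intro k hk N
    choose C hC0 hC using fun m => hdecay k hk m N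
    refine ⟨∑ m, C m, fun x => ?_⟩
    have hs : 0 < Real.sqrt (1 + ‖x‖ ^ 2) := by positivity
    have hxs : ‖x‖ ^ N ≤ Real.sqrt (1 + ‖x‖ ^ 2) ^ N := by
      gcongr
      exact Real.le_sqrt_of_sq_le (by linarith)
    calc ‖x‖ ^ N * ‖iteratedFDeriv ℝ k e x‖
        ≤ Real.sqrt (1 + ‖x‖ ^ 2) ^ N *
          ∑ m, C m * Real.sqrt (1 + ‖x‖ ^ 2) ^ (-(N : ℝ)) := by
          gcongr
          exact (aux_opNorm _).trans (Finset.sum_le_sum fun m _ => hC m x)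
      _ = ∑ m, C m := by
          rw [← Finset.sum_mul, Real.rpow_neg hs.le, Real.rpow_natCast]
          field_simp
  have hdiff : Differentiable ℝ e := he.differentiable (by simp)
  obtain ⟨c, hc⟩ := aux_lim (E := EuclideanSpace ℝ (Fin d)) (e := e)
    (by rw [← Module.finrank_eq_rank, finrank_euclideanSpace_fin]; exact_mod_cast hd) hdiff (by
      intro N
      obtain ⟨A, hA⟩ := hD 1 le_rfl N
      exact ⟨A, fun x => by simpa [norm_iteratedFDeriv_one] using hA x⟩)
  refine ⟨c, ⟨fun x => e x - c, he.sub contDiff_const, ?_⟩, fun x => rfl⟩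
  intro N k
  rcases Nat.eq_zero_or_pos k with rfl | hk
  · obtain ⟨A, hA⟩ := hc N
    obtain ⟨B, hB⟩ := (isCompact_closedBall (0 : EuclideanSpace ℝ (Fin d)) 1).exists_bound_of_continuousOn
      (f := fun x => e x - c) (he.continuous.sub continuous_const).continuousOn
    refine ⟨max A B, fun x => ?_⟩
    rw [norm_iteratedFDeriv_zero]
    rcases le_total ‖x‖ 1 with h | h
    · refine le_trans ?_ ((hB x (by simpa using h)).trans (le_max_right _ _))
      exact mul_le_of_le_one_left (norm_nonneg _) (pow_le_one₀ (norm_nonneg _) h)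
    · refine le_trans ?_ ((hA x (norm_pos_iff.1 (by linarith))).trans (le_max_left _ _))
      exact mul_le_mul_of_nonneg_right (pow_le_pow_right₀ h (Nat.le_succ N)) (norm_nonneg _)
  · obtain ⟨A, hA⟩ := hD k hk N
    refine ⟨A, fun x => ?_⟩
    have h : iteratedFDeriv ℝ k (fun x => e x - c) x = iteratedFDeriv ℝ k e x := by
      have := iteratedFDeriv_sub_apply (𝕜 := ℝ) (i := k) (x := x) (f := e) (g := fun _ => c)
        (he.contDiffAt.of_le (by exact_mod_cast le_top)) contDiffAt_const
      rw [iteratedFDeriv_const_of_ne (by omega)] at this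
      simpa [Pi.sub_def] using this
    rw [h]
    exact hA x
end
end

section
/- Let k, k' ∈ ℝ and let a, b : ℝⁿ × ℝⁿ → ℂ be smooth functions satisfying SG estimates of orders (1, k) and (1, k'), respectively. Let a_e, b_e : (ℝⁿ \ {0}) × ℝⁿ → ℂ be smooth and positively homogeneous of degree 1 in the first variable (a_e(λx,ξ) = λ a_e(x,ξ) for λ > 0, and likewise for b_e). Let χ : ℝⁿ → ℝ be smooth with χ(x) = 0 for |x| ≤ 1 and χ(x) = 1 for |x| ≥ 2, and assume that a − χ(x)a_e and b − χ(x)b_e satisfy SG estimates of orders (0, k) and (0, k'), respectively. Then for every x ≠ 0 and every ξ ∈ ℝⁿ, lim_{λ→∞} λ^{−1} {a, b}(λx, ξ) = {a_e, b_e}(x, ξ); that is, the exit principal symbol of the Poisson bracket is the Poisson bracket of the exit principal symbols. -/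
noncomputable section

open scoped BigOperators

/-- The Japanese bracket `⟨x⟩ = (1+|x|²)^{1/2}`. -/
def jb {d : ℕ} (x : EuclideanSpace ℝ (Fin d)) : ℝ := Real.sqrt (1 + ‖x‖ ^ 2)

/-- Coordinate directions in the product space `ℝⁿ × ℝᴺ`. -/
def sgDir (n N : ℕ) : Fin n ⊕ Fin N → EuclideanSpace ℝ (Fin n) × EuclideanSpace ℝ (Fin N)
  | Sum.inl i => (EuclideanSpace.single i 1, 0)
  | Sum.inr j => (0, EuclideanSpace.single j 1)

/-- `a : ℝⁿ × ℝᴺ → ℂ` is smooth and satisfies SG estimates of order `(me, mψ)`: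
every mixed partial derivative `∂_x^α ∂_ξ^β a` is bounded by
`C ⟨x⟩^(me - |α|) ⟨ξ⟩^(mψ - |β|)`.  Mixed partial derivatives are encoded as the
iterated Fréchet derivative evaluated at a tuple of coordinate directions. -/
def IsSG (n N : ℕ) (me mψ : ℝ)
    (a : EuclideanSpace ℝ (Fin n) × EuclideanSpace ℝ (Fin N) → ℂ) : Prop :=
  ContDiff ℝ (⊤ : ℕ∞) a ∧
    ∀ (k : ℕ) (m : Fin k → Fin n ⊕ Fin N), ∃ C : ℝ, 0 < C ∧
      ∀ (x : EuclideanSpace ℝ (Fin n)) (ξ : EuclideanSpace ℝ (Fin N)),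
        ‖iteratedFDeriv ℝ k a (x, ξ) (fun i => sgDir n N (m i))‖ ≤
          C * jb x ^ (me - ((Finset.univ.filter fun i => (m i).isLeft = true).card : ℝ)) *
            jb ξ ^ (mψ - ((Finset.univ.filter fun i => (m i).isRight = true).card : ℝ))


/-- The Poisson bracket `{a,b} = Σᵢ (∂a/∂ξᵢ ∂b/∂xᵢ − ∂a/∂xᵢ ∂b/∂ξᵢ)` of two functions on
`ℝⁿ × ℝⁿ`, with partial derivatives expressed via the Fréchet derivative. -/
def poissonBracket (n : ℕ)
    (a b : EuclideanSpace ℝ (Fin n) × EuclideanSpace ℝ (Fin n) → ℂ)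
    (p : EuclideanSpace ℝ (Fin n) × EuclideanSpace ℝ (Fin n)) : ℂ :=
  ∑ i : Fin n,
    (fderiv ℝ a p (0, EuclideanSpace.single i 1) * fderiv ℝ b p (EuclideanSpace.single i 1, 0) -
      fderiv ℝ a p (EuclideanSpace.single i 1, 0) * fderiv ℝ b p (0, EuclideanSpace.single i 1))

theorem aux_fderiv (n : ℕ) (k : ℝ)
    (a ae : EuclideanSpace ℝ (Fin n) × EuclideanSpace ℝ (Fin n) → ℂ)
    (hae : ContDiffOn ℝ (⊤ : ℕ∞) ae
      {p : EuclideanSpace ℝ (Fin n) × EuclideanSpace ℝ (Fin n) | p.1 ≠ 0})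
    (haehom : ∀ l : ℝ, 0 < l → ∀ x : EuclideanSpace ℝ (Fin n), x ≠ 0 →
      ∀ ξ : EuclideanSpace ℝ (Fin n), ae (l • x, ξ) = (l : ℂ) * ae (x, ξ))
    (χ : EuclideanSpace ℝ (Fin n) → ℝ)
    (hχ1 : ∀ x : EuclideanSpace ℝ (Fin n), 2 ≤ ‖x‖ → χ x = 1)
    (hrema : IsSG n n 0 k (fun p => a p - (χ p.1 : ℂ) * ae p))
    (x : EuclideanSpace ℝ (Fin n)) (hx : x ≠ 0) (ξ : EuclideanSpace ℝ (Fin n)) (i : Fin n) :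
    Filter.Tendsto (fun l : ℝ => fderiv ℝ a (l • x, ξ) (EuclideanSpace.single i 1, 0))
        Filter.atTop (nhds (fderiv ℝ ae (x, ξ) (EuclideanSpace.single i 1, 0))) ∧
    Filter.Tendsto (fun l : ℝ => (l : ℂ)⁻¹ *
          fderiv ℝ a (l • x, ξ) (0, EuclideanSpace.single i 1))
        Filter.atTop (nhds (fderiv ℝ ae (x, ξ) (0, EuclideanSpace.single i 1))) := by
  set r : EuclideanSpace ℝ (Fin n) × EuclideanSpace ℝ (Fin n) → ℂ :=
    fun p => a p - (χ p.1 : ℂ) * ae p with hr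
  have hxn : 0 < ‖x‖ := norm_pos_iff.mpr hx
  have hopen : IsOpen {p : EuclideanSpace ℝ (Fin n) × EuclideanSpace ℝ (Fin n) | p.1 ≠ 0} :=
    isOpen_ne_fun continuous_fst continuous_const
  have hdae : ∀ (y η : EuclideanSpace ℝ (Fin n)), y ≠ 0 → DifferentiableAt ℝ ae (y, η) := by
    intro y η hy
    exact ((hae.contDiffAt (hopen.mem_nhds hy)).differentiableAt (by simp))
  have hev : ∀ᶠ l : ℝ in Filter.atTop, 0 < l ∧ 2 < ‖l • x‖ := by
    filter_upwards [Filter.eventually_gt_atTop (0 : ℝ),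
      Filter.eventually_gt_atTop (2 / ‖x‖)] with l hl hl2
    refine ⟨hl, ?_⟩
    rw [norm_smul, Real.norm_of_nonneg hl.le]
    exact (div_lt_iff₀ hxn).mp hl2
  have hsplit : ∀ l : ℝ, 0 < l → 2 < ‖l • x‖ →
      fderiv ℝ a (l • x, ξ) = fderiv ℝ r (l • x, ξ) + fderiv ℝ ae (l • x, ξ) := by
    intro l hl h2
    have hne : l • x ≠ 0 := smul_ne_zero hl.ne' hx
    have hE : a =ᶠ[nhds (l • x, ξ)] (r + ae) := by
      have : IsOpen {p : EuclideanSpace ℝ (Fin n) × EuclideanSpace ℝ (Fin n) | 2 < ‖p.1‖} :=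
        isOpen_lt continuous_const (continuous_fst.norm)
      filter_upwards [this.mem_nhds (show (l • x, ξ) ∈ _ from h2)] with p hp
      have hp' : 2 < ‖p.1‖ := hp
      simp [hr, hχ1 p.1 hp'.le]
    rw [hE.fderiv_eq, fderiv_add ((hrema.1.differentiable (by simp)) _) (hdae _ _ hne)]
  have hhom : ∀ l : ℝ, 0 < l → ∀ u v : EuclideanSpace ℝ (Fin n),
      fderiv ℝ ae (l • x, ξ) (l • u, v) = (l : ℂ) * fderiv ℝ ae (x, ξ) (u, v) := by
    intro l hl u v
    have hne : l • x ≠ 0 := smul_ne_zero hl.ne' hx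
    let L : EuclideanSpace ℝ (Fin n) × EuclideanSpace ℝ (Fin n) →L[ℝ]
        EuclideanSpace ℝ (Fin n) × EuclideanSpace ℝ (Fin n) :=
      (l • ContinuousLinearMap.fst ℝ _ _).prod (ContinuousLinearMap.snd ℝ _ _)
    have h1 : HasFDerivAt (ae ∘ L) ((fderiv ℝ ae (l • x, ξ)).comp L) (x, ξ) :=
      HasFDerivAt.comp (x, ξ) (hdae (l • x) ξ hne).hasFDerivAt L.hasFDerivAt
    have h2 : HasFDerivAt (fun p => (l : ℂ) * ae p) ((l : ℂ) • fderiv ℝ ae (x, ξ)) (x, ξ) :=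
      (hdae x ξ hx).hasFDerivAt.const_mul _
    have hE : (ae ∘ L) =ᶠ[nhds (x, ξ)] (fun p => (l : ℂ) * ae p) := by
      filter_upwards [hopen.mem_nhds (show (x, ξ) ∈ _ from hx)] with p hp
      exact haehom l hl p.1 hp p.2
    have h3 := (h2.congr_of_eventuallyEq hE).unique h1
    have h4 := congrArg (fun T => T (u, v)) h3
    simpa [L] using h4.symm
  have hjb : ∀ y : EuclideanSpace ℝ (Fin n), ‖y‖ ≤ jb y := by
    intro y
    exact Real.le_sqrt_of_sq_le (by linarith)
  constructor
  · obtain ⟨C, hC, hb⟩ := hrema.2 1 (fun _ => Sum.inl i)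
    have hr0 : Filter.Tendsto (fun l : ℝ => fderiv ℝ r (l • x, ξ) (EuclideanSpace.single i 1, 0))
        Filter.atTop (nhds 0) := by
      have hD : Filter.Tendsto (fun l : ℝ => (C * jb ξ ^ k / ‖x‖) * l⁻¹) Filter.atTop (nhds 0) := by
        simpa using tendsto_inv_atTop_zero.const_mul (C * jb ξ ^ k / ‖x‖)
      refine squeeze_zero_norm' ?_ hD
      filter_upwards [hev] with l ⟨hl, h2⟩
      have h := hb (l • x) ξ
      simp [sgDir, Real.rpow_neg_one] at h
      have hjξ : 0 ≤ jb ξ ^ k := Real.rpow_nonneg (Real.sqrt_nonneg _) _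
      have h5 : (jb (l • x))⁻¹ ≤ (l * ‖x‖)⁻¹ := by
        apply inv_anti₀ (by positivity)
        have := hjb (l • x)
        rwa [norm_smul, Real.norm_of_nonneg hl.le] at this
      calc _ ≤ _ := h
        _ ≤ C * (l * ‖x‖)⁻¹ * jb ξ ^ k := by gcongr
        _ = _ := by field_simp
    have := hr0.add_const (fderiv ℝ ae (x, ξ) (EuclideanSpace.single i 1, 0))
    rw [zero_add] at this
    refine this.congr' ?_
    filter_upwards [hev] with l ⟨hl, h2⟩
    have hl' : (l : ℂ) ≠ 0 := by exact_mod_cast hl.ne'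
    have h6 := hhom l hl (EuclideanSpace.single i 1) 0
    have h7 : ((l • EuclideanSpace.single i (1 : ℝ), 0) :
        EuclideanSpace ℝ (Fin n) × EuclideanSpace ℝ (Fin n)) =
        l • (EuclideanSpace.single i (1 : ℝ), 0) := by simp
    rw [h7, map_smul, Complex.real_smul] at h6
    rw [hsplit l hl h2, ContinuousLinearMap.add_apply, mul_left_cancel₀ hl' h6]
  · obtain ⟨C, hC, hb⟩ := hrema.2 1 (fun _ => Sum.inr i)
    have hr0 : Filter.Tendsto (fun l : ℝ => (l : ℂ)⁻¹ *
          fderiv ℝ r (l • x, ξ) (0, EuclideanSpace.single i 1))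
        Filter.atTop (nhds 0) := by
      have hD : Filter.Tendsto (fun l : ℝ => (C * jb ξ ^ (k - 1)) * l⁻¹)
          Filter.atTop (nhds 0) := by
        simpa using tendsto_inv_atTop_zero.const_mul (C * jb ξ ^ (k - 1))
      refine squeeze_zero_norm' ?_ hD
      filter_upwards [hev] with l ⟨hl, h2⟩
      have h := hb (l • x) ξ
      simp [sgDir] at h
      rw [norm_mul, norm_inv, Complex.norm_real, Real.norm_of_nonneg hl.le, mul_comm]
      gcongr
    have := hr0.add_const (fderiv ℝ ae (x, ξ) (0, EuclideanSpace.single i 1))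
    rw [zero_add] at this
    refine this.congr' ?_
    filter_upwards [hev] with l ⟨hl, h2⟩
    have hl' : (l : ℂ) ≠ 0 := by exact_mod_cast hl.ne'
    have h6 := hhom l hl 0 (EuclideanSpace.single i 1)
    rw [smul_zero] at h6
    rw [hsplit l hl h2, ContinuousLinearMap.add_apply, h6, mul_add, inv_mul_cancel_left₀ hl']

/-- the exit principal symbol of the Poisson bracket is the Poisson bracket
of the exit principal symbols: if `a, b` are SG symbols of orders `(1,k)` and `(1,k')`,
with exit principal symbols `a_e, b_e` (homogeneous of degree `1` in `x`, with remainders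
`a − χ a_e`, `b − χ b_e` of orders `(0,k)`, `(0,k')`), then for `x ≠ 0` and all `ξ`,
`λ^{−1} {a,b}(λx, ξ) → {a_e, b_e}(x, ξ)` as `λ → ∞`. -/
theorem stmt_16 (n : ℕ) (k k' : ℝ)
    (a b ae be : EuclideanSpace ℝ (Fin n) × EuclideanSpace ℝ (Fin n) → ℂ)
    (ha : IsSG n n 1 k a) (hb : IsSG n n 1 k' b)
    (hae : ContDiffOn ℝ (⊤ : ℕ∞) ae
      {p : EuclideanSpace ℝ (Fin n) × EuclideanSpace ℝ (Fin n) | p.1 ≠ 0})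
    (hbe : ContDiffOn ℝ (⊤ : ℕ∞) be
      {p : EuclideanSpace ℝ (Fin n) × EuclideanSpace ℝ (Fin n) | p.1 ≠ 0})
    (haehom : ∀ l : ℝ, 0 < l → ∀ x : EuclideanSpace ℝ (Fin n), x ≠ 0 →
      ∀ ξ : EuclideanSpace ℝ (Fin n), ae (l • x, ξ) = (l : ℂ) * ae (x, ξ))
    (hbehom : ∀ l : ℝ, 0 < l → ∀ x : EuclideanSpace ℝ (Fin n), x ≠ 0 →
      ∀ ξ : EuclideanSpace ℝ (Fin n), be (l • x, ξ) = (l : ℂ) * be (x, ξ))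
    (χ : EuclideanSpace ℝ (Fin n) → ℝ)
    (hχsmooth : ContDiff ℝ (⊤ : ℕ∞) χ)
    (hχ0 : ∀ x : EuclideanSpace ℝ (Fin n), ‖x‖ ≤ 1 → χ x = 0)
    (hχ1 : ∀ x : EuclideanSpace ℝ (Fin n), 2 ≤ ‖x‖ → χ x = 1)
    (hrema : IsSG n n 0 k (fun p => a p - (χ p.1 : ℂ) * ae p))
    (hremb : IsSG n n 0 k' (fun p => b p - (χ p.1 : ℂ) * be p)) :
    ∀ x : EuclideanSpace ℝ (Fin n), x ≠ 0 → ∀ ξ : EuclideanSpace ℝ (Fin n),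
      Filter.Tendsto (fun l : ℝ => (l : ℂ)⁻¹ * poissonBracket n a b (l • x, ξ))
        Filter.atTop (nhds (poissonBracket n ae be (x, ξ))) := by
  intro x hx ξ
  unfold poissonBracket
  simp only [Finset.mul_sum]
  refine tendsto_finsetSum _ fun i _ => ?_
  obtain ⟨a1, a2⟩ := aux_fderiv n k a ae hae haehom χ hχ1 hrema x hx ξ i
  obtain ⟨b1, b2⟩ := aux_fderiv n k' b be hbe hbehom χ hχ1 hremb x hx ξ i
  refine ((a2.mul b1).sub (a1.mul b2)).congr fun l => ?_
  ring
end
end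

section
/- Let n ≥ 2 and let γ^1, …, γ^n and ρ_1, …, ρ_n be smooth complex-valued functions on ℝⁿ × (ℝⁿ \ {0}) (variables (x, ξ)) such that, for all μ > 0, γ^k(x, μξ) = μ^{−1} γ^k(x,ξ) and ρ_k(x, μξ) = ρ_k(x,ξ), and such that at every point the symmetry relations ∂γ^i/∂ξ_j = ∂γ^j/∂ξ_i and ∂γ^i/∂x_j = −∂ρ_j/∂ξ_i hold for all i, j. Then the function (x,ξ) ↦ Σ_{k=1}^n ξ_k γ^k(x,ξ) has vanishing differential on ℝⁿ × (ℝⁿ \ {0}), and hence is constant. -/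
noncomputable section

open scoped BigOperators

/-- Partial derivative in the `x`-variables of a function on `ℝⁿ × ℝⁿ`. -/
def Dx (n : ℕ) (f : EuclideanSpace ℝ (Fin n) × EuclideanSpace ℝ (Fin n) → ℂ)
    (p : EuclideanSpace ℝ (Fin n) × EuclideanSpace ℝ (Fin n)) (j : Fin n) : ℂ :=
  fderiv ℝ f p (EuclideanSpace.single j 1, 0)

/-- Partial derivative in the `ξ`-variables of a function on `ℝⁿ × ℝⁿ`. -/
def Dxi (n : ℕ) (f : EuclideanSpace ℝ (Fin n) × EuclideanSpace ℝ (Fin n) → ℂ)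
    (p : EuclideanSpace ℝ (Fin n) × EuclideanSpace ℝ (Fin n)) (j : Fin n) : ℂ :=
  fderiv ℝ f p (0, EuclideanSpace.single j 1)

lemma fd_decomp (n : ℕ) (L : EuclideanSpace ℝ (Fin n) × EuclideanSpace ℝ (Fin n) →L[ℝ] ℂ)
    (v : EuclideanSpace ℝ (Fin n)) :
    L (0, v) = ∑ k, (v k : ℂ) * L (0, EuclideanSpace.single k 1) := by
  have h := (EuclideanSpace.basisFun (Fin n) ℝ).sum_repr v
  have h2 : L (0, v) = (L.comp (ContinuousLinearMap.inr ℝ _ _)) v := by simp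
  rw [h2]
  conv_lhs => rw [← h]
  rw [map_sum]
  refine Finset.sum_congr rfl fun k _ => ?_
  rw [map_smul]
  simp

lemma fd_ext (n : ℕ) (L : EuclideanSpace ℝ (Fin n) × EuclideanSpace ℝ (Fin n) →L[ℝ] ℂ)
    (h1 : ∀ j, L (EuclideanSpace.single j 1, 0) = 0)
    (h2 : ∀ j, L (0, EuclideanSpace.single j 1) = 0) : L = 0 := by
  have e1 : L.comp (ContinuousLinearMap.inl ℝ _ _) = 0 := by
    apply ContinuousLinearMap.coe_injective
    apply (EuclideanSpace.basisFun (Fin n) ℝ).toBasis.ext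
    intro j
    simpa using h1 j
  refine ContinuousLinearMap.ext fun ⟨u, v⟩ => ?_
  have : ((u, v) : EuclideanSpace ℝ (Fin n) × EuclideanSpace ℝ (Fin n)) = (u, 0) + (0, v) := by
    simp
  rw [this, map_add, fd_decomp n L v]
  have := congrArg (fun M => M u) e1
  simp at this
  simp [this, h2]

lemma euler (n : ℕ) (f : EuclideanSpace ℝ (Fin n) × EuclideanSpace ℝ (Fin n) → ℂ)
    (p : EuclideanSpace ℝ (Fin n) × EuclideanSpace ℝ (Fin n)) (hf : DifferentiableAt ℝ f p)
    (g : ℝ → ℂ) (c : ℂ) (hg : HasDerivAt g c 1)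
    (h : ∀ μ : ℝ, 0 < μ → f (p.1, μ • p.2) = g μ * f p) :
    fderiv ℝ f p (0, p.2) = c * f p := by
  have hl : HasDerivAt (fun μ : ℝ => ((p.1, μ • p.2) :
      EuclideanSpace ℝ (Fin n) × EuclideanSpace ℝ (Fin n))) (0, p.2) 1 := by
    have := (hasDerivAt_id (1:ℝ)).smul_const p.2
    simp only [one_smul, id] at this
    exact (hasDerivAt_const (1:ℝ) p.1).prodMk this
  have hf' : HasFDerivAt f (fderiv ℝ f p) (p.1, (1:ℝ) • p.2) := by
    simpa using hf.hasFDerivAt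
  have h1 := hf'.comp_hasDerivAt (1:ℝ) hl
  have h2 := hg.mul_const (f p)
  refine h1.unique (h2.congr_of_eventuallyEq ?_)
  filter_upwards [lt_mem_nhds (zero_lt_one (α := ℝ))] with μ hμ
  exact h μ hμ

/-- let `n ≥ 2` and let `γ^k, ρ_k` be smooth on `ℝⁿ × (ℝⁿ∖{0})` with
`γ^k(x,μξ) = μ^{−1}γ^k(x,ξ)` and `ρ_k(x,μξ) = ρ_k(x,ξ)` for `μ > 0`, satisfying the
symmetry relations `∂γ^i/∂ξ_j = ∂γ^j/∂ξ_i` and `∂γ^i/∂x_j = −∂ρ_j/∂ξ_i`.  Then the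
function `(x,ξ) ↦ Σ_k ξ_k γ^k(x,ξ)` has vanishing differential on `ℝⁿ × (ℝⁿ∖{0})`, and
hence is constant there. -/
theorem stmt_18 (n : ℕ) (hn : 2 ≤ n)
    (γ ρ : Fin n → EuclideanSpace ℝ (Fin n) × EuclideanSpace ℝ (Fin n) → ℂ)
    (hγ : ∀ k, ContDiffOn ℝ (⊤ : ℕ∞) (γ k)
      {p : EuclideanSpace ℝ (Fin n) × EuclideanSpace ℝ (Fin n) | p.2 ≠ 0})
    (hρ : ∀ k, ContDiffOn ℝ (⊤ : ℕ∞) (ρ k)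
      {p : EuclideanSpace ℝ (Fin n) × EuclideanSpace ℝ (Fin n) | p.2 ≠ 0})
    (hγhom : ∀ k, ∀ μ : ℝ, 0 < μ → ∀ x : EuclideanSpace ℝ (Fin n),
      ∀ ξ : EuclideanSpace ℝ (Fin n), ξ ≠ 0 → γ k (x, μ • ξ) = (μ : ℂ)⁻¹ * γ k (x, ξ))
    (hρhom : ∀ k, ∀ μ : ℝ, 0 < μ → ∀ x : EuclideanSpace ℝ (Fin n),
      ∀ ξ : EuclideanSpace ℝ (Fin n), ξ ≠ 0 → ρ k (x, μ • ξ) = ρ k (x, ξ))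
    (hsym₁ : ∀ p ∈ {p : EuclideanSpace ℝ (Fin n) × EuclideanSpace ℝ (Fin n) | p.2 ≠ 0},
      ∀ i j, Dxi n (γ i) p j = Dxi n (γ j) p i)
    (hsym₂ : ∀ p ∈ {p : EuclideanSpace ℝ (Fin n) × EuclideanSpace ℝ (Fin n) | p.2 ≠ 0},
      ∀ i j, Dx n (γ i) p j = -Dxi n (ρ j) p i) :
    (∀ p ∈ {p : EuclideanSpace ℝ (Fin n) × EuclideanSpace ℝ (Fin n) | p.2 ≠ 0},
      fderiv ℝ (fun q : EuclideanSpace ℝ (Fin n) × EuclideanSpace ℝ (Fin n) =>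
        ∑ k, (q.2 k : ℂ) * γ k q) p = 0) ∧
    ∃ c : ℂ, ∀ p ∈ {p : EuclideanSpace ℝ (Fin n) × EuclideanSpace ℝ (Fin n) | p.2 ≠ 0},
      ∑ k, (p.2 k : ℂ) * γ k p = c := by
  have hopen : IsOpen {p : EuclideanSpace ℝ (Fin n) × EuclideanSpace ℝ (Fin n) | p.2 ≠ 0} :=
    isOpen_ne_fun continuous_snd continuous_const
  have dγ : ∀ k, ∀ p : EuclideanSpace ℝ (Fin n) × EuclideanSpace ℝ (Fin n), p.2 ≠ 0 →
      DifferentiableAt ℝ (γ k) p := fun k p hp =>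
    ((hγ k).differentiableOn (by simp)).differentiableAt (hopen.mem_nhds hp)
  have dρ : ∀ k, ∀ p : EuclideanSpace ℝ (Fin n) × EuclideanSpace ℝ (Fin n), p.2 ≠ 0 →
      DifferentiableAt ℝ (ρ k) p := fun k p hp =>
    ((hρ k).differentiableOn (by simp)).differentiableAt (hopen.mem_nhds hp)
  have hF : ∀ p : EuclideanSpace ℝ (Fin n) × EuclideanSpace ℝ (Fin n), p.2 ≠ 0 →
      HasFDerivAt (fun q : EuclideanSpace ℝ (Fin n) × EuclideanSpace ℝ (Fin n) =>
        ∑ k, (q.2 k : ℂ) * γ k q)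
      (∑ k, ((p.2 k : ℂ) • fderiv ℝ (γ k) p + γ k p •
        (Complex.ofRealCLM.comp ((EuclideanSpace.proj k).comp
          (ContinuousLinearMap.snd ℝ (EuclideanSpace ℝ (Fin n)) (EuclideanSpace ℝ (Fin n))))))) p := by
    intro p hp
    refine HasFDerivAt.fun_sum fun k _ => ?_
    exact HasFDerivAt.mul (Complex.ofRealCLM.comp ((EuclideanSpace.proj k).comp
          (ContinuousLinearMap.snd ℝ (EuclideanSpace ℝ (Fin n)) (EuclideanSpace ℝ (Fin n))))).hasFDerivAt
      (dγ k p hp).hasFDerivAt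
  have hzero : ∀ p ∈ {p : EuclideanSpace ℝ (Fin n) × EuclideanSpace ℝ (Fin n) | p.2 ≠ 0},
      fderiv ℝ (fun q : EuclideanSpace ℝ (Fin n) × EuclideanSpace ℝ (Fin n) =>
        ∑ k, (q.2 k : ℂ) * γ k q) p = 0 := by
    intro p hp
    have hp' : p.2 ≠ 0 := hp
    rw [(hF p hp).fderiv]
    apply fd_ext
    · intro j
      have e := euler n (ρ j) p (dρ j p hp) (fun _ => 1) 0 (hasDerivAt_const _ _)
        (fun μ hμ => by simpa using hρhom j μ hμ p.1 p.2 hp)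
      rw [fd_decomp, zero_mul] at e
      have s : ∀ k, fderiv ℝ (γ k) p (EuclideanSpace.single j 1, 0)
        = - fderiv ℝ (ρ j) p (0, EuclideanSpace.single k 1) := fun k => hsym₂ p hp k j
      simp [s, e]
    · intro j
      have hg : HasDerivAt (fun μ : ℝ => (μ : ℂ)⁻¹) (-1) 1 := by
        have := (HasDerivAt.ofReal_comp (hasDerivAt_id (1:ℝ))).fun_inv (by simp)
        simpa using this
      have e := euler n (γ j) p (dγ j p hp) _ _ hg
        (fun μ hμ => hγhom j μ hμ p.1 p.2 hp)
      rw [fd_decomp] at e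
      have s : ∀ k, fderiv ℝ (γ k) p (0, EuclideanSpace.single j 1)
        = fderiv ℝ (γ j) p (0, EuclideanSpace.single k 1) := fun k => hsym₁ p hp k j
      simp [s, e, Finset.sum_add_distrib, apply_ite Complex.ofReal]
  refine ⟨hzero, ?_⟩
  have hconn : IsPreconnected
      {p : EuclideanSpace ℝ (Fin n) × EuclideanSpace ℝ (Fin n) | p.2 ≠ 0} := by
    have h1 : IsConnected ({0}ᶜ : Set (EuclideanSpace ℝ (Fin n))) := by
      apply isConnected_compl_singleton_of_one_lt_rank
      rw [← Module.finrank_eq_rank, finrank_euclideanSpace_fin]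
      exact_mod_cast hn
    have h2 := (isPreconnected_univ (α := EuclideanSpace ℝ (Fin n))).prod h1.isPreconnected
    convert h2 using 1
    ext p
    simp
  exact hopen.exists_is_const_of_fderiv_eq_zero hconn
    (fun p hp => (hF p hp).differentiableAt.differentiableWithinAt) hzero
end
end
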